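/- Let n ≥ 1, p ∈ (1,∞), and let ν be a positive integer. If u : 𝔹_{ℓ₂ⁿ} → 𝐁_{ℓ_p^ν} is a pluriharmonic function taking real-vector values in the real unit p-ball, then for every z ∈ 𝔹_{ℓ₂ⁿ}, |∇‖u(z)‖_p| ≤ (4/π) · (1 − ‖u(z)‖_p²)/(1 − ‖z‖₂²). -/

import Mathlib

open scoped BigOperators Topology
open Filter

/-- The `p`-norm `(∑ |x j|^p)^(1/p)` on `ℝ^ν` for a real exponent `p`. -/
noncomputable def pnormR {ν : ℕ} (p : ℝ) (x : Fin ν → ℝ) : ℝ :=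
  (∑ j, |x j| ^ p) ^ (1 / p)

/-- `|∇‖u(z)‖_p| = limsup_{w → z} |‖u(w)‖_p - ‖u(z)‖_p| / ‖w - z‖₂`. -/
noncomputable def gradPnormCR {n ν : ℕ} (p : ℝ)
    (u : EuclideanSpace ℂ (Fin n) → (Fin ν → ℝ)) (z : EuclideanSpace ℂ (Fin n)) : ℝ :=
  Filter.limsup (fun w => |pnormR p (u w) - pnormR p (u z)| / ‖w - z‖) (𝓝[≠] z)

/-!
For a functional `ℓ` of norm at most `1`, `ℓ ∘ u` is the real part of a holomorphic function `g`
on the ball with values in the strip `|re w| < 1`. The map `w ↦ exp (π i w / 2)` carries this strip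
onto the right half-plane, where the Schwarz–Pick lemma, applied on complex lines through `z`, gives
`‖g'(z)‖ ≤ (4 / π) cos (π re g(z) / 2) / (1 - ‖z‖²)`, and `cos (π x / 2) ≤ 1 - x²` for `|x| ≤ 1`.
The norm of `u` varies to first order like `ℓ ∘ u` for functionals `ℓ` that (almost) norm `u z`.
-/

open Metric
open scoped ComplexConjugate

section HalfPlane

lemma norm_sub_le_norm_add_conj {z w : ℂ} (hz : 0 ≤ z.re) (hw : 0 ≤ w.re) :
    ‖z - w‖ ≤ ‖z + conj w‖ := by
  rw [← sq_le_sq₀ (norm_nonneg _) (norm_nonneg _), Complex.sq_norm, Complex.sq_norm,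
    Complex.normSq_apply, Complex.normSq_apply]
  simp only [Complex.sub_re, Complex.sub_im, Complex.add_re, Complex.add_im, Complex.conj_re,
    Complex.conj_im]
  nlinarith [mul_nonneg hz hw]

theorem norm_deriv_center_le_of_re_pos {f : ℂ → ℂ} {c : ℂ} {r : ℝ} (hr : 0 < r)
    (hf : DifferentiableOn ℂ f (ball c r)) (hpos : ∀ μ ∈ ball c r, 0 < (f μ).re) :
    ‖deriv f c‖ ≤ 2 * (f c).re / r := by
  have hc : c ∈ ball c r := mem_ball_self hr
  have hfc : 0 < 2 * (f c).re := by linarith [hpos c hc]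
  have hden : ∀ μ ∈ ball c r, f μ + conj (f c) ≠ 0 := fun μ hμ h ↦ by
    have hre := congrArg Complex.re h
    simp only [Complex.add_re, Complex.conj_re, Complex.zero_re] at hre
    linarith [hpos μ hμ, hpos c hc]
  let cayley : ℂ → ℂ := fun μ ↦ (f μ - f c) / (f μ + conj (f c))
  have hcayley : ‖deriv cayley c‖ ≤ 1 / r := by
    refine Complex.norm_deriv_le_div_of_mapsTo_ball
      ((hf.sub_const _).fun_div (hf.add_const _) hden) (fun μ hμ ↦ ?_) hr
    simp only [cayley, sub_self, zero_div, mem_closedBall_zero_iff, norm_div]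
    exact div_le_one_of_le₀ (norm_sub_le_norm_add_conj (hpos μ hμ).le (hpos c hc).le)
      (norm_nonneg _)
  have hderiv : deriv cayley c = deriv f c / (2 * (f c).re : ℝ) := by
    have hf' := (hf.differentiableAt (ball_mem_nhds c hr)).hasDerivAt
    have hne := hden c hc
    rw [((hf'.sub_const (f c)).fun_div (hf'.add_const (conj (f c))) hne).deriv]
    rw [Complex.add_conj] at hne ⊢
    field_simp
    ring
  rw [hderiv, norm_div, Complex.norm_of_nonneg hfc.le, div_le_iff₀ hfc] at hcayley
  exact hcayley.trans_eq (one_div_mul_eq_div _ _)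

/-- The Möbius automorphism of the disk `|μ| < r` that carries `0` to `a`; it moves the base point
of the Schwarz lemma away from the centre of the disk. -/
noncomputable def diskShift (r : ℝ) (a μ : ℂ) : ℂ :=
  r ^ 2 * (μ + a) / (r ^ 2 + conj a * μ)

namespace diskShift

variable {r : ℝ} {a μ : ℂ}

lemma denom_ne_zero (ha : ‖a‖ < r) (hμ : ‖μ‖ < r) : (r : ℂ) ^ 2 + conj a * μ ≠ 0 := fun h ↦ by
  have hnorm : ‖conj a * μ‖ = r ^ 2 := by
    rw [eq_neg_of_add_eq_zero_right h, norm_neg, norm_pow, Complex.norm_real, Real.norm_eq_abs,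
      sq_abs]
  rw [norm_mul, RCLike.norm_conj] at hnorm
  nlinarith [norm_nonneg a, norm_nonneg μ]

lemma normSq_denom_sub (r : ℝ) (a μ : ℂ) :
    ‖(r : ℂ) ^ 2 + conj a * μ‖ ^ 2 - (r * ‖μ + a‖) ^ 2 = (r ^ 2 - ‖a‖ ^ 2) * (r ^ 2 - ‖μ‖ ^ 2) := by
  simp only [mul_pow, Complex.sq_norm, Complex.normSq_apply, ← Complex.ofReal_pow, Complex.add_re,
    Complex.add_im, Complex.mul_re, Complex.mul_im, Complex.conj_re, Complex.conj_im,
    Complex.ofReal_re, Complex.ofReal_im]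
  ring

lemma mem_ball (ha : ‖a‖ < r) (hμ : ‖μ‖ < r) : diskShift r a μ ∈ ball 0 r := by
  have hr : 0 < r := (norm_nonneg a).trans_lt ha
  have hlt : r * ‖μ + a‖ < ‖(r : ℂ) ^ 2 + conj a * μ‖ := by
    refine lt_of_pow_lt_pow_left₀ 2 (norm_nonneg _) (sub_pos.1 ?_)
    rw [normSq_denom_sub]
    exact mul_pos (by nlinarith [norm_nonneg a]) (by nlinarith [norm_nonneg μ])
  rw [mem_ball_zero_iff, diskShift, norm_div, norm_mul, norm_pow, Complex.norm_of_nonneg hr.le,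
    div_lt_iff₀ (norm_pos_iff.2 (denom_ne_zero ha hμ))]
  nlinarith

lemma apply_zero (hr : r ≠ 0) (a : ℂ) : diskShift r a 0 = a := by
  simp [diskShift, hr]

lemma differentiableOn (ha : ‖a‖ < r) : DifferentiableOn ℂ (diskShift r a) (ball 0 r) := by
  unfold diskShift
  exact DifferentiableOn.fun_div (by fun_prop) (by fun_prop)
    fun μ hμ ↦ denom_ne_zero ha (mem_ball_zero_iff.1 hμ)

lemma hasDerivAt_zero (hr : r ≠ 0) (a : ℂ) :
    HasDerivAt (diskShift r a) (((r ^ 2 - ‖a‖ ^ 2) / r ^ 2 : ℝ) : ℂ) 0 := by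
  have hr' : (r : ℂ) ≠ 0 := Complex.ofReal_ne_zero.2 hr
  have hnum : HasDerivAt (fun μ : ℂ ↦ (r : ℂ) ^ 2 * (μ + a)) (r ^ 2) 0 := by
    simpa using ((hasDerivAt_id (0 : ℂ)).add_const a).const_mul ((r : ℂ) ^ 2)
  have hden : HasDerivAt (fun μ : ℂ ↦ (r : ℂ) ^ 2 + conj a * μ) (conj a) 0 := by
    simpa using ((hasDerivAt_id (0 : ℂ)).const_mul (conj a)).const_add ((r : ℂ) ^ 2)
  refine (hnum.fun_div hden (by simpa using hr)).congr_deriv ?_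
  push_cast
  rw [← Complex.conj_mul']
  simp only [mul_zero, zero_add, add_zero]
  field_simp

end diskShift

theorem norm_deriv_le_of_re_pos_of_disk {f : ℂ → ℂ} {r : ℝ} {a : ℂ} (ha : ‖a‖ < r)
    (hf : DifferentiableOn ℂ f (ball 0 r)) (hpos : ∀ μ ∈ ball (0 : ℂ) r, 0 < (f μ).re) :
    ‖deriv f a‖ ≤ 2 * r * (f a).re / (r ^ 2 - ‖a‖ ^ 2) := by
  have hr : 0 < r := (norm_nonneg a).trans_lt ha
  have hra : 0 < r ^ 2 - ‖a‖ ^ 2 := by nlinarith [norm_nonneg a]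
  have hmaps : Set.MapsTo (diskShift r a) (ball 0 r) (ball 0 r) := fun μ hμ ↦
    diskShift.mem_ball ha (mem_ball_zero_iff.1 hμ)
  have hcentre := norm_deriv_center_le_of_re_pos hr
    (hf.comp (diskShift.differentiableOn ha) hmaps) fun μ hμ ↦ hpos _ (hmaps hμ)
  have hfa : HasDerivAt f (deriv f a) (diskShift r a 0) := by
    rw [diskShift.apply_zero hr.ne']
    exact (hf.differentiableAt (isOpen_ball.mem_nhds (mem_ball_zero_iff.2 ha))).hasDerivAt
  rw [(hfa.comp 0 (diskShift.hasDerivAt_zero hr.ne' a)).deriv,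
    Function.comp_apply, diskShift.apply_zero hr.ne', norm_mul,
    Complex.norm_of_nonneg (by positivity), ← mul_div_assoc,
    div_le_div_iff₀ (by positivity) hr] at hcentre
  rw [le_div_iff₀ hra]
  exact le_of_mul_le_mul_right (by linarith) hr

end HalfPlane

section UnitBall

variable {E : Type*} [NormedAddCommGroup E] [InnerProductSpace ℂ E]

lemma norm_sub_inner_smul_add_smul_sq {ξ : E} (hξ : ‖ξ‖ = 1) (z : E) (μ : ℂ) :
    ‖z - inner ℂ ξ z • ξ + μ • ξ‖ ^ 2 = ‖z - inner ℂ ξ z • ξ‖ ^ 2 + ‖μ‖ ^ 2 := by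
  have horth : inner ℂ (z - inner ℂ ξ z • ξ) (μ • ξ) = 0 := by
    rw [inner_smul_right, inner_sub_left, inner_smul_left, inner_conj_symm,
      inner_self_eq_norm_sq_to_K, hξ]
    simp only [Complex.coe_algebraMap, Complex.ofReal_one, one_pow, mul_one, sub_self, mul_zero]
  rw [@norm_add_sq ℂ, horth, norm_smul, hξ, mul_one, map_zero, mul_zero, add_zero]

-- The complex line through `z` in direction `ξ` meets the unit ball in a disk of radius at most
-- `1`, centred at the orthogonal projection of the origin to that line.
theorem norm_fderiv_le_of_re_pos {f : E → ℂ} (hf : DifferentiableOn ℂ f (ball 0 1))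
    (hpos : ∀ x ∈ ball (0 : E) 1, 0 < (f x).re) {z : E} (hz : z ∈ ball 0 1) :
    ‖fderiv ℂ f z‖ ≤ 2 * (f z).re / (1 - ‖z‖ ^ 2) := by
  have hz' : 0 < 1 - ‖z‖ ^ 2 := by nlinarith [norm_nonneg z, mem_ball_zero_iff.1 hz]
  have hfz := hpos z hz
  refine ContinuousLinearMap.opNorm_le_of_unit_norm (by positivity) fun ξ hξ ↦ ?_
  set a := inner ℂ ξ z
  set z₀ := z - a • ξ
  set r := √(1 - ‖z₀‖ ^ 2)
  have hline : ∀ μ : ℂ, ‖z₀ + μ • ξ‖ ^ 2 = ‖z₀‖ ^ 2 + ‖μ‖ ^ 2 :=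
    norm_sub_inner_smul_add_smul_sq hξ z
  have hza : z₀ + a • ξ = z := sub_add_cancel z _
  have hz_sq : ‖z‖ ^ 2 = ‖z₀‖ ^ 2 + ‖a‖ ^ 2 := by rw [← hline, hza]
  have hr_sq : r ^ 2 = 1 - ‖z₀‖ ^ 2 := Real.sq_sqrt (by nlinarith [sq_nonneg ‖a‖])
  have hr : r ≤ 1 := Real.sqrt_le_one.2 (by nlinarith [sq_nonneg ‖z₀‖])
  have ha : ‖a‖ < r := Real.lt_sqrt_of_sq_lt (by linarith)
  have hmaps : Set.MapsTo (fun μ : ℂ ↦ z₀ + μ • ξ) (ball 0 r) (ball 0 1) := fun μ hμ ↦ by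
    rw [mem_ball_zero_iff] at hμ ⊢
    refine (sq_lt_one_iff₀ (norm_nonneg _)).1 ?_
    rw [hline]
    nlinarith [norm_nonneg μ]
  have hderiv : HasDerivAt (fun μ : ℂ ↦ f (z₀ + μ • ξ)) (fderiv ℂ f z ξ) a := by
    refine HasFDerivAt.comp_hasDerivAt (l := f) a ?_
      (by simpa using ((hasDerivAt_id a).smul_const ξ).const_add z₀)
    rw [hza]
    exact (hf.differentiableAt (isOpen_ball.mem_nhds hz)).hasFDerivAt
  have hslice := norm_deriv_le_of_re_pos_of_disk (f := fun μ ↦ f (z₀ + μ • ξ)) ha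
    (hf.comp (by fun_prop) hmaps) fun μ hμ ↦ hpos _ (hmaps hμ)
  rw [hderiv.deriv, hza] at hslice
  calc ‖fderiv ℂ f z ξ‖ ≤ 2 * r * (f z).re / (r ^ 2 - ‖a‖ ^ 2) := hslice
    _ = r * (2 * (f z).re / (1 - ‖z‖ ^ 2)) := by rw [hr_sq, hz_sq]; ring
    _ ≤ 2 * (f z).re / (1 - ‖z‖ ^ 2) := mul_le_of_le_one_left (by positivity) hr

lemma cos_pi_div_two_mul_le {x : ℝ} (hx : |x| ≤ 1) : Real.cos (Real.pi / 2 * x) ≤ 1 - x ^ 2 := by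
  have hconcave : |x| * (√2 / 2) ≤ Real.sin (|x| * (Real.pi / 4)) := by
    have h := strictConcaveOn_sin_Icc.concaveOn.2 (x := Real.pi / 4) (y := 0)
      ⟨by positivity, by linarith [Real.pi_pos]⟩ ⟨le_rfl, Real.pi_pos.le⟩ (abs_nonneg x)
      (sub_nonneg.2 hx) (add_sub_cancel _ _)
    simpa only [Real.sin_pi_div_four, smul_eq_mul, Real.sin_zero, mul_zero, add_zero] using h
  have hsq : x ^ 2 / 2 ≤ Real.sin (|x| * (Real.pi / 4)) ^ 2 :=
    calc x ^ 2 / 2 = (|x| * (√2 / 2)) ^ 2 := by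
          rw [mul_pow, sq_abs, div_pow, Real.sq_sqrt zero_le_two]; ring
      _ ≤ Real.sin (|x| * (Real.pi / 4)) ^ 2 := by gcongr
  calc Real.cos (Real.pi / 2 * x) = Real.cos (2 * (|x| * (Real.pi / 4))) := by
        rw [← Real.cos_abs, abs_mul, abs_of_pos Real.pi_div_two_pos]; congr 1; ring
    _ = 1 - 2 * Real.sin (|x| * (Real.pi / 4)) ^ 2 := by rw [Real.cos_two_mul, Real.cos_sq']; ring
    _ ≤ 1 - x ^ 2 := by linarith

lemma re_exp_pi_div_two_mul_I_mul (w : ℂ) :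
    (Complex.exp ((Real.pi / 2 : ℝ) * Complex.I * w)).re =
      ‖Complex.exp ((Real.pi / 2 : ℝ) * Complex.I * w)‖ * Real.cos (Real.pi / 2 * w.re) := by
  rw [Complex.exp_re, Complex.norm_exp, mul_assoc, Complex.im_ofReal_mul, Complex.I_mul_im]

theorem norm_fderiv_le_of_abs_re_lt_one {g : E → ℂ} (hg : DifferentiableOn ℂ g (ball 0 1))
    (hre : ∀ x ∈ ball (0 : E) 1, |(g x).re| < 1) {z : E} (hz : z ∈ ball 0 1) :
    ‖fderiv ℂ g z‖ ≤ 4 / Real.pi * ((1 - (g z).re ^ 2) / (1 - ‖z‖ ^ 2)) := by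
  have hz' : 0 < 1 - ‖z‖ ^ 2 := by nlinarith [norm_nonneg z, mem_ball_zero_iff.1 hz]
  set κ : ℂ := (Real.pi / 2 : ℝ) * Complex.I
  have hκ : ‖κ‖ = Real.pi / 2 := by
    rw [norm_mul, Complex.norm_I, mul_one, Complex.norm_of_nonneg Real.pi_div_two_pos.le]
  let f : E → ℂ := fun x ↦ Complex.exp (κ * g x)
  have hf_pos : ∀ x ∈ ball (0 : E) 1, 0 < (f x).re := fun x hx ↦ by
    obtain ⟨hlo, hhi⟩ := abs_lt.1 (hre x hx)
    rw [re_exp_pi_div_two_mul_I_mul]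
    exact mul_pos (norm_pos_iff.2 (Complex.exp_ne_zero _))
      (Real.cos_pos_of_mem_Ioo ⟨by nlinarith [Real.pi_pos], by nlinarith [Real.pi_pos]⟩)
  have hfderiv : fderiv ℂ f z = f z • κ • fderiv ℂ g z :=
    ((hg.differentiableAt (isOpen_ball.mem_nhds hz)).hasFDerivAt.const_mul κ).cexp.fderiv
  have hbound := norm_fderiv_le_of_re_pos (hg.const_mul κ).cexp hf_pos hz
  change ‖fderiv ℂ f z‖ ≤ _ at hbound
  have hfz : 0 < ‖f z‖ := norm_pos_iff.2 (Complex.exp_ne_zero _)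
  have hcos : Real.pi / 2 * ‖fderiv ℂ g z‖ ≤
      2 * Real.cos (Real.pi / 2 * (g z).re) / (1 - ‖z‖ ^ 2) := by
    refine le_of_mul_le_mul_left ?_ hfz
    calc ‖f z‖ * (Real.pi / 2 * ‖fderiv ℂ g z‖) = ‖fderiv ℂ f z‖ := by
          rw [hfderiv, norm_smul, norm_smul, hκ]
      _ ≤ 2 * (f z).re / (1 - ‖z‖ ^ 2) := hbound
      _ = ‖f z‖ * (2 * Real.cos (Real.pi / 2 * (g z).re) / (1 - ‖z‖ ^ 2)) := by
          rw [re_exp_pi_div_two_mul_I_mul]; ring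
  calc ‖fderiv ℂ g z‖ = 2 / Real.pi * (Real.pi / 2 * ‖fderiv ℂ g z‖) := by field_simp
    _ ≤ 2 / Real.pi * (2 * (1 - (g z).re ^ 2) / (1 - ‖z‖ ^ 2)) := by
        gcongr
        refine hcos.trans ?_
        gcongr
        exact cos_pi_div_two_mul_le (hre z hz).le
    _ = 4 / Real.pi * ((1 - (g z).re ^ 2) / (1 - ‖z‖ ^ 2)) := by ring

end UnitBall

section NormGradient

/-- The gradient `|∇‖u(z)‖|` of the norm of a map between arbitrary normed spaces; `gradPnormCR`
is the case of the `p`-norm on `ℝ^ν`. -/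
noncomputable def gradNorm {E F : Type*} [NormedAddCommGroup E] [NormedAddCommGroup F]
    (u : E → F) (z : E) : ℝ :=
  limsup (fun w ↦ |‖u w‖ - ‖u z‖| / ‖w - z‖) (𝓝[≠] z)

variable {F : Type*} [NormedAddCommGroup F] [NormedSpace ℝ F]

-- The upper bound tests `d` on a functional norming `v + d`, the lower one on a functional
-- norming `v`; the former nearly norms `v`, which costs the term `4 ‖v‖ ‖d‖`.
lemma abs_norm_add_sub_norm_le {v d : F} {K : ℝ}
    (hK : ∀ ℓ : StrongDual ℝ F, ‖ℓ‖ ≤ 1 → |ℓ d| ≤ K * (1 - ℓ v ^ 2)) :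
    |‖v + d‖ - ‖v‖| ≤ K * (1 - ‖v‖ ^ 2 + 4 * (‖v‖ * ‖d‖)) := by
  have hK0 : 0 ≤ K := by simpa using hK 0 (by simp)
  have hle : ∀ {ℓ : StrongDual ℝ F} (x : F), ‖ℓ‖ ≤ 1 → ℓ x ≤ ‖x‖ := fun {ℓ} x hℓ ↦
    (le_abs_self _).trans (ℓ.le_of_opNorm_le_of_le hℓ le_rfl |>.trans_eq (one_mul _))
  refine abs_le.2 ⟨?_, ?_⟩
  · obtain ⟨ℓ, hℓ, hℓv⟩ := exists_dual_vector'' ℝ v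
    replace hℓv : ℓ v = ‖v‖ := hℓv
    have hd := (abs_le.1 (hK ℓ hℓ)).1
    have hvd := hle (v + d) hℓ
    rw [map_add] at hvd
    rw [hℓv] at hd hvd
    nlinarith [mul_nonneg hK0 (mul_nonneg (norm_nonneg v) (norm_nonneg d))]
  · obtain ⟨ℓ, hℓ, hℓvd⟩ := exists_dual_vector'' ℝ (v + d)
    replace hℓvd : ℓ v + ℓ d = ‖v + d‖ := by rw [← map_add]; exact hℓvd
    have hv : ℓ v ≤ ‖v‖ := hle v hℓ
    have hv' : ‖v‖ - 2 * ‖d‖ ≤ ℓ v := by linarith [hle d hℓ, norm_sub_le_norm_add v d]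
    have hsq : ‖v‖ ^ 2 - ℓ v ^ 2 ≤ 4 * (‖v‖ * ‖d‖) := by
      nlinarith [mul_nonneg (norm_nonneg v) (sub_nonneg.2 hv'), sq_nonneg (‖v‖ - ℓ v)]
    calc ‖v + d‖ - ‖v‖ ≤ ℓ d := by linarith
      _ ≤ K * (1 - ℓ v ^ 2) := (le_abs_self _).trans (hK ℓ hℓ)
      _ ≤ K * (1 - ‖v‖ ^ 2 + 4 * (‖v‖ * ‖d‖)) := by gcongr; linarith

theorem gradNorm_le_of_hasFDerivAt {E : Type*} [NormedAddCommGroup E] [NormedSpace ℝ E]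
    {u : E → F} {u' : E →L[ℝ] F} {z : E} [(𝓝[≠] z).NeBot] {C : ℝ} (hu : HasFDerivAt u u' z)
    (hC : ∀ ℓ : StrongDual ℝ F, ‖ℓ‖ ≤ 1 → ‖ℓ ∘L u'‖ ≤ C * (1 - ℓ (u z) ^ 2)) :
    gradNorm u z ≤ C * (1 - ‖u z‖ ^ 2) := by
  let bound : E → ℝ := fun w ↦ ‖w - z‖⁻¹ * ‖u w - u z - u' (w - z)‖ +
    C * (1 - ‖u z‖ ^ 2 + 4 * (‖u z‖ * ‖u' (w - z)‖))
  have hlinear : ∀ w, |‖u z + u' (w - z)‖ - ‖u z‖| ≤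
      C * ‖w - z‖ * (1 - ‖u z‖ ^ 2 + 4 * (‖u z‖ * ‖u' (w - z)‖)) := fun w ↦
    abs_norm_add_sub_norm_le fun ℓ hℓ ↦
      ((ℓ ∘L u').le_of_opNorm_le (hC ℓ hℓ) (w - z)).trans_eq (mul_right_comm _ _ _)
  have hslope : ∀ᶠ w in 𝓝[≠] z, |‖u w‖ - ‖u z‖| / ‖w - z‖ ≤ bound w := by
    filter_upwards [self_mem_nhdsWithin] with w hw
    have hwz : 0 < ‖w - z‖ := norm_pos_iff.2 (sub_ne_zero.2 hw)
    have hrem : |‖u w‖ - ‖u z + u' (w - z)‖| ≤ ‖u w - u z - u' (w - z)‖ := by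
      rw [sub_sub]; exact abs_norm_sub_norm_le _ _
    rw [div_le_iff₀ hwz]
    calc |‖u w‖ - ‖u z‖|
        ≤ |‖u w‖ - ‖u z + u' (w - z)‖| + |‖u z + u' (w - z)‖ - ‖u z‖| := abs_sub_le _ _ _
      _ ≤ ‖u w - u z - u' (w - z)‖ +
          C * ‖w - z‖ * (1 - ‖u z‖ ^ 2 + 4 * (‖u z‖ * ‖u' (w - z)‖)) :=
        add_le_add hrem (hlinear w)
      _ = bound w * ‖w - z‖ := by simp only [bound]; field_simp
  have hbound : Tendsto bound (𝓝[≠] z) (𝓝 (C * (1 - ‖u z‖ ^ 2))) := by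
    have hcont : Tendsto (fun w ↦ C * (1 - ‖u z‖ ^ 2 + 4 * (‖u z‖ * ‖u' (w - z)‖))) (𝓝 z)
        (𝓝 (C * (1 - ‖u z‖ ^ 2))) := by
      refine Continuous.tendsto' (by fun_prop) _ _ ?_
      simp only [sub_self, map_zero, norm_zero, mul_zero, add_zero]
    simpa only [zero_add] using
      ((hasFDerivAt_iff_tendsto.1 hu).add hcont).mono_left nhdsWithin_le_nhds
  calc gradNorm u z ≤ limsup bound (𝓝[≠] z) :=
        limsup_le_limsup hslope
          (isCoboundedUnder_le_of_le _ (x := 0) fun w ↦ by positivity) hbound.isBoundedUnder_le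
    _ = C * (1 - ‖u z‖ ^ 2) := hbound.limsup_eq

end NormGradient

-- A pluriharmonic map is given as `R ∘ h` with `h` holomorphic and `R` real-linear; the real part
-- on a complexification is one such `R`.
theorem stmt2_general {E F G : Type*} [NormedAddCommGroup E] [InnerProductSpace ℂ E]
    [Nontrivial E] [NormedAddCommGroup F] [NormedSpace ℝ F] [NormedAddCommGroup G]
    [NormedSpace ℂ G] [NormedSpace ℝ G] [IsScalarTower ℝ ℂ G]
    {u : E → F} {h : E → G} (R : G →L[ℝ] F) (hh : DifferentiableOn ℂ h (ball 0 1))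
    (hR : ∀ x ∈ ball (0 : E) 1, u x = R (h x)) (hu : ∀ x ∈ ball (0 : E) 1, ‖u x‖ < 1)
    {z : E} (hz : z ∈ ball 0 1) :
    gradNorm u z ≤ 4 / Real.pi * ((1 - ‖u z‖ ^ 2) / (1 - ‖z‖ ^ 2)) := by
  have hball : ball (0 : E) 1 ∈ 𝓝 z := isOpen_ball.mem_nhds hz
  have : (𝓝[≠] z).NeBot := Module.punctured_nhds_neBot ℂ E z
  have hhz := (hh.differentiableAt hball).hasFDerivAt
  have hu' : HasFDerivAt u (R ∘L (fderiv ℂ h z).restrictScalars ℝ) z :=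
    (R.hasFDerivAt.comp z (hhz.restrictScalars ℝ)).congr_of_eventuallyEq
      (eventually_of_mem hball hR)
  refine (gradNorm_le_of_hasFDerivAt (C := 4 / Real.pi / (1 - ‖z‖ ^ 2)) hu'
    fun ℓ hℓ ↦ ?_).trans_eq (by ring)
  let L : StrongDual ℂ G := StrongDual.extendRCLike (ℓ ∘L R)
  have hL : ∀ y, (L y).re = ℓ (R y) := StrongDual.re_extendRCLike_apply (𝕜 := ℂ) (ℓ ∘L R)
  have hre : ∀ x ∈ ball (0 : E) 1, |(L (h x)).re| < 1 := fun x hx ↦ by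
    rw [hL, ← hR x hx]
    exact (ℓ.le_of_opNorm_le hℓ (u x)).trans_lt (by simpa only [one_mul] using hu x hx)
  have hbound := norm_fderiv_le_of_abs_re_lt_one (L.differentiable.comp_differentiableOn hh) hre hz
  rw [(L.hasFDerivAt.comp z hhz).fderiv, Function.comp_apply, hL, ← hR z hz] at hbound
  refine (ContinuousLinearMap.opNorm_le_bound _ (norm_nonneg (L ∘L fderiv ℂ h z)) fun v ↦ ?_).trans
    (hbound.trans_eq (by ring))
  calc ‖ℓ (R (fderiv ℂ h z v))‖ = |(L (fderiv ℂ h z v)).re| := by rw [hL, Real.norm_eq_abs]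
    _ ≤ ‖(L ∘L fderiv ℂ h z) v‖ := Complex.abs_re_le_norm _
    _ ≤ ‖L ∘L fderiv ℂ h z‖ * ‖v‖ := (L ∘L fderiv ℂ h z).le_opNorm v

lemma pnormR_eq_norm_toLp {ν : ℕ} (p : ℝ) [hp : Fact (1 ≤ ENNReal.ofReal p)] (x : Fin ν → ℝ) :
    pnormR p x = ‖WithLp.toLp (ENNReal.ofReal p) x‖ := by
  have hp_pos : 0 < p := one_pos.trans_le (ENNReal.one_le_ofReal.1 hp.out)
  have hp_toReal : (ENNReal.ofReal p).toReal = p := ENNReal.toReal_ofReal hp_pos.le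
  simp only [PiLp.norm_eq_sum (hp_toReal.symm ▸ hp_pos), hp_toReal, pnormR, Real.norm_eq_abs]

lemma gradPnormCR_eq_gradNorm_toLp {n ν : ℕ} (p : ℝ) [Fact (1 ≤ ENNReal.ofReal p)]
    (u : EuclideanSpace ℂ (Fin n) → (Fin ν → ℝ)) (z : EuclideanSpace ℂ (Fin n)) :
    gradPnormCR p u z = gradNorm (fun w ↦ WithLp.toLp (ENNReal.ofReal p) (u w)) z := by
  simp only [gradPnormCR, gradNorm, pnormR_eq_norm_toLp]

theorem stmt2 (n ν : ℕ) (hn : 1 ≤ n) (hν : 1 ≤ ν) (p : ℝ) (hp : 1 < p)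
    (u : EuclideanSpace ℂ (Fin n) → (Fin ν → ℝ))
    (h : EuclideanSpace ℂ (Fin n) → (Fin ν → ℂ))
    (hh : DifferentiableOn ℂ h (Metric.ball 0 1))
    (hre : ∀ z ∈ Metric.ball (0 : EuclideanSpace ℂ (Fin n)) 1, ∀ j, u z j = (h z j).re)
    (hmap : ∀ z ∈ Metric.ball (0 : EuclideanSpace ℂ (Fin n)) 1, pnormR p (u z) < 1)
    (z : EuclideanSpace ℂ (Fin n)) (hz : ‖z‖ < 1) :
    gradPnormCR p u z ≤ (4 / Real.pi) * ((1 - pnormR p (u z) ^ 2) / (1 - ‖z‖ ^ 2)) := by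
  have : Nonempty (Fin n) := ⟨⟨0, hn⟩⟩
  have : Fact (1 ≤ ENNReal.ofReal p) := ⟨ENNReal.one_le_ofReal.2 hp.le⟩
  let reLp : (Fin ν → ℂ) →L[ℝ] PiLp (ENNReal.ofReal p) fun _ : Fin ν ↦ ℝ :=
    (PiLp.continuousLinearEquiv _ ℝ _).symm.toContinuousLinearMap ∘L .piMap fun _ ↦ Complex.reCLM
  simp only [gradPnormCR_eq_gradNorm_toLp, pnormR_eq_norm_toLp] at hmap ⊢
  exact stmt2_general reLp hh (fun w hw ↦ PiLp.ext (hre w hw)) hmap (mem_ball_zero_iff.2 hz)
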